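/- For every Subjective Logic opinion O = (b,d,u), the ratio r_O = √(x_O²+y_O²)/√(x_{M_O}²+y_{M_O}²) of the distance from B to O over the distance from B to M_O satisfies 0 ≤ r_O ≤ 1. -/

import Mathlib

/-!
The line `y = 2 - √3 x` carries the side `DU` of the opinion triangle, and for `O ≠ B` the ray
from `B` through `O` meets it at `M_O`. Since `y_O + √3 x_O = 2 (d + u)`, the linear form
`y + √3 x` takes the value `2` at `O / (d + u)`, so this point is `M_O` and `r_O = d + u = 1 - b`.
-/

/-- The direction α_O of an opinion. -/
noncomputable def alphaO (b d u : ℝ) : ℝ :=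
  if b = 1 then 0 else Real.arctan (Real.sqrt 3 * u / (2 * d + u))

/-- Cartesian x-coordinate of an opinion. -/
noncomputable def xO (d u : ℝ) : ℝ := (2 * d + u) / Real.sqrt 3

/-- Cartesian y-coordinate of an opinion. -/
noncomputable def yO (u : ℝ) : ℝ := u

/-- x-coordinate of the point M_O. -/
noncomputable def xM (b d u : ℝ) : ℝ :=
  (2 - yO u + Real.tan (alphaO b d u) * xO d u) / (Real.tan (alphaO b d u) + Real.sqrt 3)

/-- y-coordinate of the point M_O. -/
noncomputable def yM (b d u : ℝ) : ℝ := -Real.sqrt 3 * xM b d u + 2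

/-- The ratio r_O = |BO| / |BM_O|. -/
noncomputable def rO (b d u : ℝ) : ℝ :=
  Real.sqrt (xO d u ^ 2 + yO u ^ 2) / Real.sqrt (xM b d u ^ 2 + yM b d u ^ 2)

section

variable {b d u : ℝ}

theorem sqrt_div_sq_add_div_sq (x y t : ℝ) :
    √((x / t) ^ 2 + (y / t) ^ 2) = √(x ^ 2 + y ^ 2) / |t| := by
  rw [div_pow, div_pow, ← add_div, Real.sqrt_div' _ (sq_nonneg t), Real.sqrt_sq_eq_abs]

theorem yO_add_sqrt_three_mul_xO (d u : ℝ) : yO u + √3 * xO d u = 2 * (d + u) := by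
  have h3 : √3 ≠ 0 := by positivity
  rw [yO, xO, mul_div_cancel₀ _ h3]
  ring

theorem tan_alphaO (hb : b ≠ 1) : Real.tan (alphaO b d u) = yO u / xO d u := by
  rw [alphaO, if_neg hb, Real.tan_arctan, yO, xO, div_div_eq_mul_div, mul_comm]

theorem xM_eq_xO_div (hb : b ≠ 1) (hx : xO d u ≠ 0) : xM b d u = xO d u / (d + u) := by
  have hden : yO u / xO d u + √3 = 2 * (d + u) / xO d u := by
    rw [← yO_add_sqrt_three_mul_xO, add_div, mul_div_cancel_right₀ _ hx]
  rw [xM, tan_alphaO hb, div_mul_cancel₀ _ hx, sub_add_cancel, hden, div_div_eq_mul_div,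
    mul_div_mul_left _ _ two_ne_zero]

theorem yM_eq_yO_div (hb : b ≠ 1) (hx : xO d u ≠ 0) (hdu : d + u ≠ 0) :
    yM b d u = yO u / (d + u) := by
  rw [yM, xM_eq_xO_div hb hx, eq_div_iff hdu, add_mul, mul_assoc, div_mul_cancel₀ _ hdu]
  linarith [yO_add_sqrt_three_mul_xO d u]

theorem rO_eq_abs_add (hb : b ≠ 1) (hx : xO d u ≠ 0) (hdu : d + u ≠ 0) :
    rO b d u = |d + u| := by
  have hO : √(xO d u ^ 2 + yO u ^ 2) ≠ 0 := by positivity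
  rw [rO, xM_eq_xO_div hb hx, yM_eq_yO_div hb hx hdu, sqrt_div_sq_add_div_sq, div_div_cancel₀ hO]

theorem rO_eq_one_sub (hd : 0 ≤ d) (hu : 0 ≤ u) (hsum : b + d + u = 1) : rO b d u = 1 - b := by
  have hdu : d + u = 1 - b := by linarith
  rcases eq_or_ne b 1 with rfl | hb
  · obtain ⟨rfl, rfl⟩ : d = 0 ∧ u = 0 := ⟨by linarith, by linarith⟩
    simp [rO, xO, yO]
  · have hdu_ne : d + u ≠ 0 := hdu ▸ sub_ne_zero.mpr hb.symm
    have hdu_pos : 0 < d + u := (add_nonneg hd hu).lt_of_ne' hdu_ne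
    have hx : 0 < xO d u := div_pos (by linarith) (by positivity)
    rw [rO_eq_abs_add hb hx.ne' hdu_ne, abs_of_pos hdu_pos, hdu]

end

/-- For every Subjective Logic opinion (b,d,u), the ratio r_O = |BO|/|BM_O|
satisfies 0 ≤ r_O ≤ 1. -/
theorem stmt8 (b d u : ℝ) (hb : 0 ≤ b) (hd : 0 ≤ d) (hu : 0 ≤ u) (hsum : b + d + u = 1) :
    0 ≤ rO b d u ∧ rO b d u ≤ 1 := by
  rw [rO_eq_one_sub hd hu hsum]
  constructor <;> linarith
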